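/- Let K and L be number fields, let k ≥ 2 and l ≥ 1 be integers, and let A : 𝓞_K → 𝓞_L be a ℤ-linear map. Then the following are equivalent: (a) A(V_{K,k}) ⊆ V_{L,l}; (b) for every prime number p, the induced map 𝓞_K/p^k𝓞_K → 𝓞_L/p^l𝓞_L satisfies A(V_{K,k,p}) ⊆ V_{L,l,p}. -/

import Mathlib

open NumberField

/-- The set of `k`-free integers of a number field `K`: elements of the ring of
integers not lying in `𝔭^k` for any nonzero prime ideal `𝔭`. -/
def kfreeSet (K : Type*) [Field K] [NumberField K] (k : ℕ) : Set (𝓞 K) :=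
  {x | ∀ P : Ideal (𝓞 K), P.IsPrime → P ≠ ⊥ → x ∉ P ^ k}

lemma exists_prime_mem {K : Type*} [Field K] [NumberField K] (P : Ideal (𝓞 K)) (hP : P.IsPrime)
    (h0 : P ≠ ⊥) : ∃ p : ℕ, p.Prime ∧ (p : 𝓞 K) ∈ P := by
  have hn : Ideal.absNorm P ≠ 0 := by
    rwa [Ne, Ideal.absNorm_eq_zero_iff]
  have hm := Ideal.absNorm_mem P
  generalize Ideal.absNorm P = n at hn hm
  induction n using Nat.recOnMul with
  | zero => exact absurd rfl hn
  | one => exact absurd ((Ideal.eq_top_iff_one P).2 (by simpa using hm)) hP.ne_top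
  | prime p hp => exact ⟨p, hp, hm⟩
  | mul a b iha ihb =>
    rw [Nat.cast_mul] at hm
    rcases hP.mem_or_mem hm with h | h
    · exact iha (by rintro rfl; simp at hn) h
    · exact ihb (by rintro rfl; simp at hn) h

lemma not_coprime_mem {K : Type*} [Field K] [NumberField K] (P : Ideal (𝓞 K))
    (htop : P ≠ ⊤) (a b : ℕ) (ha : (a : 𝓞 K) ∈ P) (hb : (b : 𝓞 K) ∈ P)
    (hab : a.Coprime b) : False := by
  have h : IsCoprime (a : ℤ) (b : ℤ) := Nat.isCoprime_iff_coprime.2 hab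
  obtain ⟨u, v, huv⟩ := h
  apply htop
  rw [Ideal.eq_top_iff_one]
  have : (1 : 𝓞 K) = (u : 𝓞 K) * (a : 𝓞 K) + (v : 𝓞 K) * (b : 𝓞 K) := by
    exact_mod_cast congrArg (Int.cast : ℤ → 𝓞 K) huv.symm
  rw [this]
  exact P.add_mem (P.mul_mem_left _ ha) (P.mul_mem_left _ hb)

lemma sq_le_norm {K : Type*} [Field K] [NumberField K] (P : Ideal (𝓞 K)) (hP : P.IsPrime)
    (q : ℕ) (hq : q.Prime) (hqP : (q : 𝓞 K) ∈ P) (z : 𝓞 K) (hz : z ≠ 0) (hzP : z ∈ P ^ 2) :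
    ((q ^ 2 : ℕ) : ℤ) ≤ |Algebra.norm ℤ z| := by
  have h1 : q ∣ Ideal.absNorm P := by
    by_contra h
    exact not_coprime_mem P hP.ne_top _ _ hqP (Ideal.absNorm_mem P)
      ((Nat.Prime.coprime_iff_not_dvd hq).2 h)
  have h2 : Ideal.absNorm (P ^ 2) ∣ Ideal.absNorm (Ideal.span {z}) :=
    Ideal.absNorm_dvd_absNorm_of_le ((Ideal.span_singleton_le_iff_mem _).2 hzP)
  rw [Ideal.absNorm_span_singleton, map_pow] at h2
  have h3 : q ^ 2 ∣ (Algebra.norm ℤ z).natAbs := (pow_dvd_pow_of_dvd h1 2).trans h2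
  have h4 := Nat.le_of_dvd (Int.natAbs_pos.2 (Algebra.norm_ne_zero_iff.2 hz)) h3
  rw [Int.abs_eq_natAbs]
  exact_mod_cast h4

lemma exists_primes_finset {K : Type*} [Field K] [NumberField K] (q : ℕ) (hq : q.Prime) :
    ∃ F : Finset (Ideal (𝓞 K)), F.card ≤ Module.finrank ℚ K ∧
      ∀ P : Ideal (𝓞 K), P.IsPrime → (q : 𝓞 K) ∈ P → P ∈ F := by
  have hq' : Prime (q : ℤ) := Nat.prime_iff_prime_int.1 hq
  have h0 : Ideal.span {(q : ℤ)} ≠ ⊥ := by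
    simpa using hq.ne_zero
  have : (Ideal.span {(q : ℤ)}).IsPrime := (Ideal.span_singleton_prime hq'.ne_zero).2 hq'
  have hm : (Ideal.span {(q : ℤ)}).IsMaximal := Ideal.IsPrime.isMaximal this h0
  refine ⟨IsDedekindDomain.primesOverFinset (Ideal.span {(q : ℤ)}) (𝓞 K),
    Ideal.card_primesOverFinset_le_finrank (𝓞 K) ℚ K h0, ?_⟩
  intro P hP hqP
  rw [IsDedekindDomain.mem_primesOverFinset_iff h0]
  refine ⟨hP, ⟨?_⟩⟩
  refine hm.eq_of_le ?_ ?_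
  · have := hP
    exact (inferInstance : (P.under ℤ).IsPrime).ne_top
  · rw [Ideal.span_singleton_le_iff_mem, Ideal.mem_comap]
    simpa using hqP

lemma count_le {K ι : Type*} [Field K] [NumberField K] [Fintype ι] [DecidableEq ι]
    (b : Module.Basis ι ℤ (𝓞 K)) (C : ℕ)
    (hC : ∀ (a : 𝓞 K) (y : ℤ), (∀ i, |b.repr a i| ≤ y) →
      |Algebra.norm ℤ a| ≤ C * y ^ Fintype.card ι) (hC0 : 0 < C) (hn : 0 < Fintype.card ι)
    (P : Ideal (𝓞 K)) (hP : P.IsPrime)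
    (q : ℕ) (hq : q.Prime) (hqC : C < q) (hqP : (q : 𝓞 K) ∈ P) (y₀ : 𝓞 K) (M : ℕ)
    (hM : M.Coprime q) (B : ℕ) (s : Finset (ι → ℕ))
    (hs : ∀ c ∈ s, (∀ i, c i < B) ∧ y₀ + M * ∑ i, (c i : 𝓞 K) * b i ∈ P ^ 2) :
    s.card * q ^ 2 ≤ 4 ^ Fintype.card ι * C * B ^ Fintype.card ι + q ^ 2 := by
  set n := Fintype.card ι with hndef
  have hPn : P ^ 2 ≠ ⊤ := fun h => hP.ne_top (by
    rw [eq_top_iff, ← h]; exact Ideal.pow_le_self two_ne_zero)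
  have hqq : C < q ^ 2 := hqC.trans_le (by nlinarith)
  obtain ⟨S, hS1, hSlt, hSle⟩ : ∃ S : ℕ, 1 ≤ S ∧ C * S ^ n < q ^ 2 ∧ q ^ 2 ≤ C * (S + 1) ^ n := by
    have hbd : ∀ m : ℕ, C * m ^ n < q ^ 2 → m ≤ q ^ 2 := by
      intro m hm
      have : m ≤ m ^ n := Nat.le_self_pow hn.ne' m
      nlinarith
    have h1 : C * 1 ^ n < q ^ 2 := by simpa using hqq
    refine ⟨Nat.findGreatest (fun m => C * m ^ n < q ^ 2) (q ^ 2), ?_, ?_, ?_⟩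
    · exact Nat.le_findGreatest (hbd 1 h1) h1
    · exact Nat.findGreatest_spec (P := fun m => C * m ^ n < q ^ 2) (hbd 1 h1) h1
    · by_contra! h
      have := Nat.le_findGreatest (P := fun m => C * m ^ n < q ^ 2) (hbd _ h) h
      omega
  have hcard : s.card ≤ (B / S + 1) ^ n := by
    have : (Fintype.piFinset fun _ : ι => Finset.range (B / S + 1)).card = (B / S + 1) ^ n := by
      simp [hndef]
    rw [← this]
    refine Finset.card_le_card_of_injOn (fun c i => c i / S) ?_ ?_
    · intro c hc
      simp only [Finset.mem_coe, Fintype.mem_piFinset, Finset.mem_range]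
      intro i
      exact Nat.lt_succ_of_le (Nat.div_le_div_right ((hs c hc).1 i).le)
    · intro c hc c' hc' h
      by_contra hne
      set z : 𝓞 K := ∑ i, ((c i : ℤ) - (c' i : ℤ)) • b i with hz
      have hrep : ∀ i, b.repr z i = (c i : ℤ) - c' i := by
        intro i
        rw [hz, b.repr_sum_self]
      have hz0 : z ≠ 0 := by
        intro h0
        apply hne
        funext i
        have := hrep i
        rw [h0] at this
        simp at this
        omega
      have hMz : (M : 𝓞 K) * z ∈ P ^ 2 := by
        have := (P ^ 2).sub_mem (hs c hc).2 (hs c' hc').2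
        convert this using 1
        rw [hz, add_sub_add_left_eq_sub, ← mul_sub, ← Finset.sum_sub_distrib]
        congr 1
        refine Finset.sum_congr rfl fun i _ => ?_
        rw [zsmul_eq_mul]; push_cast; ring
      have hzP : z ∈ P ^ 2 := by
        have h : IsCoprime (M : ℤ) ((q ^ 2 : ℕ) : ℤ) :=
          Nat.isCoprime_iff_coprime.2 (hM.pow_right 2)
        obtain ⟨u, v, huv⟩ := h
        have h1 : (u : 𝓞 K) * (M : 𝓞 K) + (v : 𝓞 K) * (q : 𝓞 K) ^ 2 = 1 := by
          exact_mod_cast congrArg (Int.cast : ℤ → 𝓞 K) huv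
        have h2 : z = u * (M * z) + (v * z) * (q : 𝓞 K) ^ 2 := by
          linear_combination (-z) * h1
        rw [h2]
        exact Ideal.add_mem _ (Ideal.mul_mem_left _ _ hMz)
          (Ideal.mul_mem_left _ _ (Ideal.pow_mem_pow hqP 2))
      have h1 := sq_le_norm P hP q hq hqP z hz0 hzP
      have h2 := hC z S (by
        intro i
        rw [hrep]
        have hi : c i / S = c' i / S := congrFun h i
        have e1 := Nat.div_add_mod (c i) S
        have e2 := Nat.div_add_mod (c' i) S
        have e3 := Nat.mod_lt (c i) hS1
        have e4 := Nat.mod_lt (c' i) hS1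
        rw [hi] at e1
        rw [abs_le]
        constructor <;> omega)
      have h3 : q ^ 2 ≤ C * S ^ n := by exact_mod_cast h1.trans h2
      omega
  rcases le_or_gt S B with hSB | hSB
  · have h1 : (B / S + 1) * S ≤ 2 * B := by
      have := Nat.div_mul_le_self B S
      nlinarith
    have h2 : (S + 1) ^ n ≤ (2 * S) ^ n := Nat.pow_le_pow_left (by omega) n
    calc s.card * q ^ 2 ≤ (B / S + 1) ^ n * (C * (2 * S) ^ n) :=
          Nat.mul_le_mul hcard (hSle.trans (Nat.mul_le_mul_left _ h2))
      _ = C * 2 ^ n * ((B / S + 1) * S) ^ n := by rw [mul_pow, mul_pow]; ring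
      _ ≤ C * 2 ^ n * (2 * B) ^ n := Nat.mul_le_mul_left _ (Nat.pow_le_pow_left h1 n)
      _ = 4 ^ n * C * B ^ n := by
          rw [mul_pow, show (4 : ℕ) = 2 * 2 from rfl, mul_pow]; ring
      _ ≤ _ := Nat.le_add_right _ _
  · rw [Nat.div_eq_of_lt hSB] at hcard
    simp at hcard
    nlinarith [Nat.zero_le (4 ^ n * C * B ^ n), sq_nonneg q]

lemma sieve (K : Type*) [Field K] [NumberField K] :
    ∃ T : ℕ, ∀ (y₀ : 𝓞 K) (M : ℕ), (∀ c : 𝓞 K, y₀ + M * c ≠ 0) →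
      ∃ c : 𝓞 K, ∀ q : ℕ, q.Prime → T < q → M.Coprime q →
        ∀ P : Ideal (𝓞 K), P.IsPrime → (q : 𝓞 K) ∈ P → y₀ + M * c ∉ P ^ 2 := by
  classical
  let b := Module.Free.chooseBasis ℤ (𝓞 K)
  set ι := Module.Free.ChooseBasisIndex ℤ (𝓞 K)
  obtain ⟨C, hC0, hC⟩ : ∃ C : ℕ, 0 < C ∧ ∀ (a : 𝓞 K) (y : ℤ), (∀ i, |b.repr a i| ≤ y) →
      |Algebra.norm ℤ a| ≤ C * y ^ Fintype.card ι := by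
    refine ⟨(ClassGroup.normBound AbsoluteValue.abs b).toNat, ?_, ?_⟩
    · have := ClassGroup.normBound_pos AbsoluteValue.abs b
      omega
    · intro a y h
      rw [Int.toNat_of_nonneg (ClassGroup.normBound_pos AbsoluteValue.abs b).le]
      exact ClassGroup.norm_le AbsoluteValue.abs b a h
  have hn : 0 < Fintype.card ι := Fintype.card_pos_iff.2 b.index_nonempty
  set n := Fintype.card ι with hndef
  set g := Module.finrank ℚ K with hg
  set D := 4 ^ n * C with hD
  refine ⟨2 * g * D + C + 1, fun y₀ M hne => ?_⟩
  set T := 2 * g * D + C + 1 with hT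
  by_contra! hbad
  -- bound for the coordinates of `y₀`
  set Y : ℕ := ∑ i, (b.repr y₀ i).natAbs with hY
  set C₁ : ℕ := C * (Y + M) ^ n with hC₁
  set B : ℕ := 4 * g ^ 2 * C₁ + 1 with hB
  set W : ℕ := B ^ n with hW
  set X : ℕ := Nat.sqrt (C₁ * W) with hX
  let box : Finset (ι → ℕ) := Fintype.piFinset fun _ => Finset.range B
  have hbox : box.card = W := by simp [box, hW, hndef]
  let z : (ι → ℕ) → 𝓞 K := fun c => ∑ i, (c i : 𝓞 K) * b i
  have hzrep : ∀ c i, b.repr (z c) i = c i := by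
    intro c i
    have : z c = ∑ i, (c i : ℤ) • b i := by
      simp [z]
    rw [this, b.repr_sum_self]
  choose! F hFc hF using fun (q : ℕ) (hq : q.Prime) => exists_primes_finset (K := K) q hq
  let bad : Ideal (𝓞 K) → Finset (ι → ℕ) := fun P => {c ∈ box | y₀ + M * z c ∈ P ^ 2}
  let Q : Finset ℕ := {q ∈ Finset.Ioc T X | q.Prime ∧ M.Coprime q}
  let G : ℕ → Finset (Ideal (𝓞 K)) := fun q => {P ∈ F q | P.IsPrime ∧ (q : 𝓞 K) ∈ P}
  have hcover : box ⊆ Q.biUnion fun q => (G q).biUnion bad := by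
    intro c hc
    obtain ⟨q, hq, hTq, hMq, P, hP, hqP, hmem⟩ := hbad (z c)
    have h1 := sq_le_norm P hP q hq hqP _ (hne (z c)) hmem
    have h2 := hC (y₀ + M * z c) ((Y + M) * B : ℕ) (by
      intro i
      have e : b.repr (y₀ + M * z c) i = b.repr y₀ i + M * c i := by
        have : (M : 𝓞 K) * z c = (M : ℤ) • z c := by simp
        rw [this, map_add, map_smul, Finsupp.add_apply, Finsupp.smul_apply, hzrep, smul_eq_mul]
      have hci : c i < B := by
        simpa using (Fintype.mem_piFinset.1 hc) i
      have hYi : (b.repr y₀ i).natAbs ≤ Y :=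
        Finset.single_le_sum (f := fun i => (b.repr y₀ i).natAbs) (fun _ _ => Nat.zero_le _)
          (Finset.mem_univ i)
      rw [e]
      refine (abs_add_le _ _).trans ?_
      rw [Int.abs_eq_natAbs (b.repr y₀ i), abs_of_nonneg (by positivity : (0 : ℤ) ≤ M * c i)]
      have : (b.repr y₀ i).natAbs + M * c i ≤ (Y + M) * B := by
        have hB1 : 1 ≤ B := by omega
        rw [add_mul]
        exact add_le_add (hYi.trans (Nat.le_mul_of_pos_right _ hB1))
          (Nat.mul_le_mul_left _ hci.le)
      exact_mod_cast this)
    have h3 : q ^ 2 ≤ C * ((Y + M) * B) ^ n := by exact_mod_cast h1.trans h2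
    have h4 : q ≤ X := by
      rw [hX, Nat.le_sqrt, ← sq, hC₁, hW, mul_assoc, ← mul_pow]
      exact h3
    simp only [Finset.mem_biUnion]
    refine ⟨q, ?_, P, ?_, ?_⟩
    · exact Finset.mem_filter.2 ⟨Finset.mem_Ioc.2 ⟨hTq, h4⟩, hq, hMq⟩
    · simp [G, hF q hq P hP hqP, hP, hqP]
    · simp only [bad, Finset.mem_filter]; exact ⟨hc, hmem⟩
  have hW0 : 0 < W := by positivity
  have hbadcard : ∀ q ∈ Q, ∀ P ∈ G q, ((bad P).card : ℝ) ≤ D * W * ((q : ℝ) ^ 2)⁻¹ + 1 := by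
    intro q hq P hP
    simp only [Q, G, Finset.mem_filter, Finset.mem_Ioc] at hq hP
    obtain ⟨⟨hTq, hqX⟩, hqp, hMq⟩ := hq
    have h := count_le b C hC hC0 hn P hP.2.1 q hqp (by omega) hP.2.2 y₀ M hMq B (bad P) (by
      intro c hc
      simp only [bad, Finset.mem_filter] at hc
      exact ⟨fun i => by simpa using (Fintype.mem_piFinset.1 hc.1) i, hc.2⟩)
    have h' : ((bad P).card : ℝ) * (q : ℝ) ^ 2 ≤ D * W + (q : ℝ) ^ 2 := by exact_mod_cast h
    have hq0 : (0 : ℝ) < (q : ℝ) ^ 2 := by have := hqp.pos; positivity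
    rw [← div_eq_mul_inv, ← sub_le_iff_le_add, le_div_iff₀ hq0]
    linarith
  have hsum : (W : ℝ) ≤ ∑ q ∈ Q, (g : ℝ) * (D * W * ((q : ℝ) ^ 2)⁻¹ + 1) := by
    rw [← hbox]
    have h1 : box.card ≤ ∑ q ∈ Q, ∑ P ∈ G q, (bad P).card :=
      (Finset.card_le_card hcover).trans (Finset.card_biUnion_le.trans
        (Finset.sum_le_sum fun q _ => Finset.card_biUnion_le))
    have h2 : (box.card : ℝ) ≤ ∑ q ∈ Q, ∑ P ∈ G q, ((bad P).card : ℝ) := by exact_mod_cast h1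
    rw [hbox] at h2 ⊢
    refine h2.trans (Finset.sum_le_sum fun q hq => ?_)
    refine (Finset.sum_le_sum (hbadcard q hq)).trans ?_
    rw [Finset.sum_const, nsmul_eq_mul]
    have hqp : q.Prime := by simp only [Q, Finset.mem_filter] at hq; exact hq.2.1
    have : ((G q).card : ℝ) ≤ g := by
      exact_mod_cast (Finset.card_filter_le _ _).trans (hFc q hqp)
    gcongr
  have hsum2 : (W : ℝ) ≤ ∑ q ∈ Finset.Ioc T X, (g : ℝ) * (D * W * ((q : ℝ) ^ 2)⁻¹ + 1) :=
    hsum.trans (Finset.sum_le_sum_of_subset_of_nonneg (Finset.filter_subset _ _)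
      (fun _ _ _ => by positivity))
  have hTpos : (0 : ℝ) < T := by rw [hT]; positivity
  have hinv : ∑ q ∈ Finset.Ioc T X, ((q : ℝ) ^ 2)⁻¹ ≤ (T : ℝ)⁻¹ := by
    rcases le_or_gt T X with h | h
    · refine (sum_Ioc_inv_sq_le_sub (by omega) h).trans ?_
      have : (0 : ℝ) ≤ (X : ℝ)⁻¹ := by positivity
      linarith
    · rw [Finset.Ioc_eq_empty (by omega)]
      simp
  have hfin : (W : ℝ) ≤ g * D * W * (T : ℝ)⁻¹ + g * X := by
    refine hsum2.trans ?_
    rw [← Finset.mul_sum, Finset.sum_add_distrib, ← Finset.mul_sum, Finset.sum_const,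
      Nat.card_Ioc, nsmul_eq_mul, mul_one]
    have : ((X - T : ℕ) : ℝ) ≤ X := by exact_mod_cast Nat.sub_le _ _
    calc _ ≤ (g : ℝ) * (D * W * (T : ℝ)⁻¹ + X) := by gcongr
      _ = _ := by ring
  have hhalf : (g : ℝ) * D * W * (T : ℝ)⁻¹ ≤ W / 2 := by
    rw [← div_eq_mul_inv, div_le_iff₀ hTpos]
    have : (2 : ℝ) * g * D ≤ T := by rw [hT]; push_cast; linarith [(Nat.cast_nonneg C : (0:ℝ) ≤ C)]
    have hW0' : (0 : ℝ) ≤ W := by positivity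
    nlinarith
  have h2X : W ≤ 2 * g * X := by
    have : (W : ℝ) ≤ 2 * g * X := by linarith
    exact_mod_cast this
  have hXX : X * X ≤ C₁ * W := Nat.sqrt_le _
  have hWW : W * W ≤ (4 * g ^ 2 * C₁) * W := by
    calc W * W ≤ (2 * g * X) * (2 * g * X) := Nat.mul_le_mul h2X h2X
      _ = 4 * g ^ 2 * (X * X) := by ring
      _ ≤ 4 * g ^ 2 * (C₁ * W) := Nat.mul_le_mul_left _ hXX
      _ = _ := by ring
  have hWle := Nat.le_of_mul_le_mul_right hWW hW0
  have hBW : B ≤ W := Nat.le_self_pow hn.ne' B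
  omega

lemma exists_kfree {K : Type*} [Field K] [NumberField K] (k N : ℕ) (hk : 2 ≤ k) (hkN : k ≤ N)
    (p : ℕ) (hp : p.Prime) (x : 𝓞 K)
    (hx : ∀ P : Ideal (𝓞 K), P.IsPrime → (p : 𝓞 K) ∈ P → x ∉ P ^ k) :
    ∃ w : 𝓞 K, x + (p : 𝓞 K) ^ N * w ∈ kfreeSet K k := by
  classical
  obtain ⟨T, hT⟩ := sieve K
  set m : ℕ := ∏ q ∈ (Finset.range (T + 1)).filter (fun q => q.Prime ∧ q ≠ p), q with hm
  have hcop : (p ^ N).Coprime m := by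
    apply Nat.Coprime.pow_left
    apply Nat.Coprime.prod_right
    intro q hq
    simp only [Finset.mem_filter] at hq
    exact (Nat.coprime_primes hp hq.2.1).2 hq.2.2.symm
  obtain ⟨u, v, huv⟩ := Nat.isCoprime_iff_coprime.2 hcop
  have huv' : (u : 𝓞 K) * (p : 𝓞 K) ^ N + (v : 𝓞 K) * (m : 𝓞 K) = 1 := by
    exact_mod_cast congrArg (Int.cast : ℤ → 𝓞 K) huv
  -- local freeness at `p`
  have hloc : ∀ w : 𝓞 K, ∀ P : Ideal (𝓞 K), P.IsPrime → (p : 𝓞 K) ∈ P →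
      x + (p : 𝓞 K) ^ N * w ∉ P ^ k := by
    intro w P hP hpP h
    apply hx P hP hpP
    have h1 : (p : 𝓞 K) ^ N * w ∈ P ^ k :=
      Ideal.mul_mem_right _ _ (Ideal.pow_le_pow_right hkN (Ideal.pow_mem_pow hpP N))
    simpa using (P ^ k).sub_mem h h1
  have hform : ∀ c : 𝓞 K, x * v * m + u * (p : 𝓞 K) ^ N + ((p ^ N * m : ℕ) : 𝓞 K) * c =
      x + (p : 𝓞 K) ^ N * (u - x * u + m * c) := by
    intro c
    push_cast
    linear_combination x * huv'
  have hform' : ∀ c : 𝓞 K, x * v * m + u * (p : 𝓞 K) ^ N + ((p ^ N * m : ℕ) : 𝓞 K) * c =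
      1 + (m : 𝓞 K) * (x * v - v + (p : 𝓞 K) ^ N * c) := by
    intro c
    push_cast
    linear_combination huv'
  obtain ⟨P₀, hP₀, hpP₀⟩ : ∃ P : Ideal (𝓞 K), P.IsPrime ∧ (p : 𝓞 K) ∈ P := by
    have : ¬ IsUnit (p : 𝓞 K) := by
      intro h
      have h1 := h.map (Algebra.norm ℤ)
      have h2 : (p : 𝓞 K) = algebraMap ℤ (𝓞 K) p := by simp
      rw [h2, Algebra.norm_algebraMap, isUnit_pow_iff (Module.finrank_pos).ne'] at h1
      exact (Nat.prime_iff_prime_int.1 hp).not_unit h1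
    obtain ⟨P, hP, h⟩ := exists_max_ideal_of_mem_nonunits this
    exact ⟨P, hP.isPrime, h⟩
  obtain ⟨c, hc⟩ := hT (x * v * m + u * (p : 𝓞 K) ^ N) (p ^ N * m) (by
    intro c h
    rw [hform] at h
    apply hloc _ P₀ hP₀ hpP₀
    rw [h]
    exact Ideal.zero_mem _)
  refine ⟨u - x * u + m * c, ?_⟩
  intro P hP hP0
  obtain ⟨q, hq, hqP⟩ := exists_prime_mem P hP hP0
  by_cases hqp : q = p
  · subst hqp
    exact hloc _ P hP hqP
  intro hmem
  rcases le_or_gt q T with hqT | hqT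
  · have hqm : q ∣ m := Finset.dvd_prod_of_mem (fun q => q) (by
      simp only [Finset.mem_filter, Finset.mem_range]
      exact ⟨by omega, hq, hqp⟩)
    rw [← hform, hform'] at hmem
    have h1 := Ideal.pow_le_self (by omega : k ≠ 0) hmem
    have h2 : (m : 𝓞 K) ∈ P := by
      obtain ⟨r, hr⟩ := hqm
      rw [hr, Nat.cast_mul]
      exact P.mul_mem_right _ hqP
    apply hP.ne_top
    rw [Ideal.eq_top_iff_one]
    simpa using P.sub_mem h1 (P.mul_mem_right (x * v - v + (p : 𝓞 K) ^ N * c) h2)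
  · refine hc q hq hqT ?_ P hP hqP ?_
    · apply Nat.Coprime.mul_left
      · exact Nat.Coprime.pow_left _ ((Nat.coprime_primes hp hq).2 (Ne.symm hqp))
      · apply Nat.Coprime.prod_left
        intro r hr
        simp only [Finset.mem_filter, Finset.mem_range] at hr
        exact (Nat.coprime_primes hr.2.1 hq).2 (by omega)
    · rw [hform]
      exact Ideal.pow_le_pow_right hk hmem

/-- For a ℤ-linear map `A : 𝓞 K → 𝓞 L` and `k ≥ 2`, `l ≥ 1`, the global condition
`A(V_{K,k}) ⊆ V_{L,l}` is equivalent to the local condition `A(V_{K,k,p}) ⊆ V_{L,l,p}`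
for all prime numbers `p`. -/
theorem kfree_local_global {K L : Type*} [Field K] [NumberField K]
    [Field L] [NumberField L] (k l : ℕ) (hk : 2 ≤ k) (hl : 1 ≤ l)
    (A : 𝓞 K →ₗ[ℤ] 𝓞 L) :
    ⇑A '' kfreeSet K k ⊆ kfreeSet L l ↔
      ∀ p : ℕ, p.Prime → ∀ x : 𝓞 K,
        (∀ P : Ideal (𝓞 K), P.IsPrime → (p : 𝓞 K) ∈ P → x ∉ P ^ k) →
        ∀ Q : Ideal (𝓞 L), Q.IsPrime → (p : 𝓞 L) ∈ Q → A x ∉ Q ^ l := by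
  constructor
  · intro h p hp x hx Q hQ hpQ hmem
    obtain ⟨w, hw⟩ := exists_kfree k (max k l) hk (le_max_left _ _) p hp x hx
    have hQ0 : Q ≠ ⊥ := by
      rintro rfl
      rw [Ideal.mem_bot] at hpQ
      exact hp.ne_zero (by exact_mod_cast hpQ)
    refine h ⟨_, hw, rfl⟩ Q hQ hQ0 ?_
    have e : (p : 𝓞 K) ^ (max k l) * w = ((p : ℤ) ^ (max k l)) • w := by
      rw [zsmul_eq_mul]; push_cast; rfl
    rw [map_add, e, map_smul, zsmul_eq_mul]
    refine Ideal.add_mem _ hmem (Ideal.mul_mem_right _ _ ?_)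
    push_cast
    exact Ideal.pow_le_pow_right (le_max_right _ _) (Ideal.pow_mem_pow hpQ _)
  · rintro h _ ⟨x, hx, rfl⟩ Q hQ hQ0
    obtain ⟨p, hp, hpQ⟩ := exists_prime_mem Q hQ hQ0
    refine h p hp x (fun P hP hpP => hx P hP ?_) Q hQ hpQ
    rintro rfl
    rw [Ideal.mem_bot] at hpP
    exact hp.ne_zero (by exact_mod_cast hpP)
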